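/- Let a = (a_{ij}) be a real symmetric positive definite 2×2 matrix with determinant A = a₁₁a₂₂ − a₁₂² > 0. For every (μ₁, μ₂, y) ∈ ℝ³ not lying on the closed ray {μ₁ = 0, y = 0, μ₂ ≥ 0}, the Fourier average ᾱ₁(μ₁, μ₂, y) = ∫₀¹ α̃₁(μ₁, μ₂, x + iy) dx is well defined and is given by the closed formula ᾱ₁(μ₁, μ₂, y) = (1/(2√a₂₂))·( log 2 − γ_E − log( ϱ'/√A − (a₂₂μ₂ + a₁₂μ₁)/√(A·a₂₂) ) ), where ϱ' = √(a₁₁μ₁² + 2a₁₂μ₁μ₂ + a₂₂μ₂² + Ay²) and γ_E is the Euler–Mascheroni constant. -/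

import Mathlib

/-- The function `α₁` of the paper. -/
noncomputable def alpha1 (a11 a12 a22 μ1 μ2 : ℝ) (η : ℂ) : ℝ :=
  (1 / (2 * Real.sqrt (μ1 ^ 2 + a22 * Complex.normSq η))) *
    (1 / 2 + (1 / Real.pi) * Real.arctan ((a22 * μ2 + a12 * μ1) /
      (Real.sqrt (a11 * a22 - a12 ^ 2) * Real.sqrt (μ1 ^ 2 + a22 * Complex.normSq η))))

/-- The `n`-th term (`n ≠ 0`) of the series defining `α̃₁ − α₁`. -/
noncomputable def alpha1Term (a11 a12 a22 μ1 μ2 : ℝ) (η : ℂ) (n : ℤ) : ℝ :=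
  if n = 0 then 0
  else alpha1 a11 a12 a22 μ1 μ2 (η + (n : ℂ)) - 1 / (4 * |(n : ℝ)| * Real.sqrt a22)

/-- The periodic function `α̃₁ = α₁ + Σ_{n≠0}(α₁(μ₁,μ₂,η+n) − 1/(4|n|√a₂₂))`. -/
noncomputable def tildeAlpha1 (a11 a12 a22 μ1 μ2 : ℝ) (η : ℂ) : ℝ :=
  alpha1 a11 a12 a22 μ1 μ2 η + ∑' n : ℤ, alpha1Term a11 a12 a22 μ1 μ2 η n

/-!
On the line `x ↦ x + i y` the function `α₁` is `1 / (2 √a₂₂)` times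
`V x = (1 / 2 + arctan (c / r) / π) / r`, `r = √(b² + x²)`, for some `b ≥ 0` and `c`: the
inverse-square potential of a half-line whose axis the line passes at distance `b`. The point
`(μ₁, μ₂, y)` is off the closed ray exactly when the line misses the closed half-line, that is, when
`b > 0` or `c < 0`; then `V` is bounded and `V x = 1 / (2 |x|) + O(x⁻²)`.

Unfolding the regularised sum over translates therefore turns its mean into
`lim (∫_{-N}^N V - H_N) = lim (∫_{-N}^N V - log N) - γ`. For `b > 0` write `V` as an integral in `c`
and exchange integrals: as `R → ∞`, twice the integral over `[0, R]` is
`arsinh (R / b) + arsinh (c / b) + o(1)`. For `b = 0` this breaks down at `x = 0`, but the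
integral is `Ti₂ (R / -c) / π` with `Ti₂` the inverse tangent integral, and the inversion
formula `Ti₂ x - Ti₂ x⁻¹ = (π / 2) log x` gives its growth.
-/

open Filter Topology MeasureTheory Set Real

section RegularizedPeriodization

/-- The sum of the integer translates of `g`, made convergent by subtracting the expected leading
term `k / |n|` from the `n`-th translate. The `n = 0` summand is `g x` itself, because `k / 0 = 0`.
-/
noncomputable def regularizedPeriodization (g : ℝ → ℝ) (k x : ℝ) : ℝ :=
  ∑' n : ℤ, (g (x + n) - k / |(n : ℝ)|)

variable {g : ℝ → ℝ} {k : ℝ}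

lemma abs_div_abs_sub_div_abs_le {x z : ℝ} (hx : |x| ≤ 1) (hz : 2 ≤ |z|) :
    |k / |x + z| - (k / |z|)| ≤ 2 * |k| / z ^ 2 := by
  have hdiff : |(|z| - |x + z|)| ≤ 1 := by
    simpa [abs_sub_comm] using (abs_abs_sub_abs_le z (x + z)).trans (by simpa using hx)
  have hhalf : |z| / 2 ≤ |x + z| := by linarith [(abs_le.1 hdiff).2]
  have hpos : 0 < |x + z| := by linarith
  calc |k / |x + z| - (k / |z|)| = |k| * |(|z| - |x + z|)| / (|x + z| * |z|) := by
        rw [div_sub_div _ _ hpos.ne' (by positivity), mul_comm |x + z| k, ← mul_sub, abs_div,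
          abs_mul, abs_mul, abs_abs, abs_abs]
    _ ≤ |k| * 1 / (|z| / 2 * |z|) := by gcongr
    _ = 2 * |k| / z ^ 2 := by rw [← sq_abs z]; field_simp

lemma abs_comp_add_intCast_sub_le {K C : ℝ} (hK : ∀ x, |g x| ≤ K)
    (hC : ∀ x, x ≠ 0 → |g x - (k / |x|)| ≤ C / x ^ 2) {x : ℝ} (hx : |x| ≤ 1) (n : ℤ) :
    |g (x + n) - (k / |(n : ℝ)|)| ≤
      (4 * C + 2 * |k| + K) * (1 / (n : ℝ) ^ 2) + if n = 0 then K else 0 := by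
  have hK0 : 0 ≤ K := (abs_nonneg _).trans (hK 0)
  have hC0 : 0 ≤ C := by simpa using (abs_nonneg _).trans (hC 1 one_ne_zero)
  obtain rfl | hn := eq_or_ne n 0
  · simpa using hK x
  rw [if_neg hn, add_zero, mul_one_div]
  obtain hn1 | hn2 : |n| = 1 ∨ 2 ≤ |n| := by have := abs_pos.2 hn; omega
  · have hn1' : |(n : ℝ)| = 1 := by exact_mod_cast hn1
    rw [← sq_abs (n : ℝ), hn1']
    calc |g (x + n) - k / 1| ≤ |g (x + n)| + |k| := by simpa using abs_sub (g (x + n)) k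
      _ ≤ (4 * C + 2 * |k| + K) / 1 ^ 2 := by linarith [hK (x + n), abs_nonneg k]
  · have hn2' : (2 : ℝ) ≤ |(n : ℝ)| := by exact_mod_cast hn2
    have hhalf : |(n : ℝ)| / 2 ≤ |x + n| := by
      have := abs_sub_abs_le_abs_sub (n : ℝ) (-x)
      rw [abs_neg, sub_neg_eq_add, add_comm] at this
      linarith
    have hpos : 0 < |x + n| := by linarith
    calc |g (x + n) - (k / |(n : ℝ)|)|
        ≤ |g (x + n) - (k / |x + n|)| + |k / |x + n| - (k / |(n : ℝ)|)| := abs_sub_le _ _ _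
      _ ≤ C / (|(n : ℝ)| / 2) ^ 2 + 2 * |k| / (n : ℝ) ^ 2 := by
        gcongr
        · refine (hC _ (abs_pos.1 hpos)).trans ?_
          rw [← sq_abs (x + n)]
          gcongr
        · exact abs_div_abs_sub_div_abs_le hx hn2'
      _ = (4 * C + 2 * |k|) / (n : ℝ) ^ 2 := by rw [div_pow, sq_abs]; field_simp; ring
      _ ≤ (4 * C + 2 * |k| + K) / (n : ℝ) ^ 2 :=
        div_le_div_of_nonneg_right (le_add_of_nonneg_right hK0) (sq_nonneg _)

lemma exists_summable_bound_comp_add_intCast_sub {K C : ℝ} (hK : ∀ x, |g x| ≤ K)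
    (hC : ∀ x, x ≠ 0 → |g x - (k / |x|)| ≤ C / x ^ 2) :
    ∃ u : ℤ → ℝ, Summable u ∧ ∀ x ∈ Icc (0 : ℝ) 1, ∀ n : ℤ, ‖g (x + n) - k / |(n : ℝ)|‖ ≤ u n :=
  ⟨_, ((summable_one_div_int_pow.2 one_lt_two).mul_left _).add (hasSum_ite_eq 0 K).summable,
    fun _ hx => abs_comp_add_intCast_sub_le hK hC (abs_le.2 ⟨by linarith [hx.1], hx.2⟩)⟩

/- The sum pairs `n = i` with `n = -(i + 1)`, so it runs over `-N ≤ n < N`; the summand `k / N`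
makes up for the absence of `n = N`. -/
lemma sum_integral_add_integral_neg_eq_sub_harmonic
    (hg : ∀ a b, IntervalIntegrable g volume a b) (N : ℕ) :
    ∑ i ∈ Finset.range N, (((∫ x in (i : ℝ)..i + 1, g x) - k / |(i : ℝ)|) +
        ((∫ x in -((i : ℝ) + 1)..-i, g x) - k / |-((i : ℝ) + 1)|)) =
      (∫ x in -(N : ℝ)..N, g x) - 2 * k * harmonic N + k / N := by
  induction N with
  | zero => simp
  | succ N ih =>
    have hsplit : ∫ x in -((N : ℝ) + 1)..N + 1, g x = (∫ x in -((N : ℝ) + 1)..-N, g x) +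
        (∫ x in -(N : ℝ)..N, g x) + ∫ x in (N : ℝ)..N + 1, g x := by
      rw [intervalIntegral.integral_add_adjacent_intervals (hg _ _) (hg _ _),
        intervalIntegral.integral_add_adjacent_intervals (hg _ _) (hg _ _)]
    rw [Finset.sum_range_succ, ih, harmonic_succ, abs_neg, abs_of_nonneg (by positivity),
      abs_of_nonneg (by positivity)]
    push_cast
    rw [hsplit]
    field_simp
    ring

variable {u : ℤ → ℝ}

lemma intervalIntegrable_regularizedPeriodization (hg : Measurable g) (hu : Summable u)
    (hgu : ∀ x ∈ Icc (0 : ℝ) 1, ∀ n : ℤ, ‖g (x + n) - k / |(n : ℝ)|‖ ≤ u n) :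
    IntervalIntegrable (regularizedPeriodization g k) volume 0 1 := by
  have hmeas : Measurable (regularizedPeriodization g k) :=
    Measurable.tsum fun n => (hg.comp (measurable_add_const _)).sub_const _
  refine (intervalIntegrable_const (c := ∑' n, u n)).mono_fun' hmeas.aestronglyMeasurable ?_
  filter_upwards [ae_restrict_mem measurableSet_uIoc] with x hx
  rw [uIoc_of_le zero_le_one] at hx
  exact tsum_of_norm_bounded hu.hasSum (hgu x (Ioc_subset_Icc_self hx))

lemma hasSum_integral_sub_div_abs (hg : ∀ a b, IntervalIntegrable g volume a b) (hu : Summable u)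
    (hgu : ∀ x ∈ Icc (0 : ℝ) 1, ∀ n : ℤ, ‖g (x + n) - k / |(n : ℝ)|‖ ≤ u n) :
    HasSum (fun n : ℤ => (∫ x in (n : ℝ)..n + 1, g x) - k / |(n : ℝ)|)
      (∫ x in (0 : ℝ)..1, regularizedPeriodization g k x) := by
  have hmem : ∀ x ∈ uIoc (0 : ℝ) 1, x ∈ Icc (0 : ℝ) 1 := fun x hx => by
    rw [uIoc_of_le zero_le_one] at hx
    exact Ioc_subset_Icc_self hx
  have htranslate (n : ℤ) : IntervalIntegrable (fun x => g (x + n)) volume 0 1 := by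
    simpa using (hg (0 + n) (1 + n)).comp_add_right (n : ℝ)
  have hterm (n : ℤ) : ∫ x in (0 : ℝ)..1, (g (x + n) - k / |(n : ℝ)|) =
      (∫ x in (n : ℝ)..n + 1, g x) - k / |(n : ℝ)| := by
    rw [intervalIntegral.integral_sub (htranslate n) intervalIntegrable_const,
      intervalIntegral.integral_comp_add_right]
    simp [add_comm]
  simp_rw [← hterm]
  exact intervalIntegral.hasSum_integral_of_dominated_convergence (fun n _ => u n)
    (fun n => ((htranslate n).sub intervalIntegrable_const).def'.aestronglyMeasurable)
    (fun n => ae_of_all _ fun x hx => hgu x (hmem x hx) n)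
    (ae_of_all _ fun _ _ => hu) intervalIntegrable_const
    (ae_of_all _ fun x hx => (Summable.of_norm_bounded hu (hgu x (hmem x hx))).hasSum)

theorem integral_regularizedPeriodization (hg : ∀ a b, IntervalIntegrable g volume a b)
    (hu : Summable u) (hgu : ∀ x ∈ Icc (0 : ℝ) 1, ∀ n : ℤ, ‖g (x + n) - k / |(n : ℝ)|‖ ≤ u n)
    {L : ℝ} (hL : Tendsto (fun N : ℕ => (∫ x in -(N : ℝ)..N, g x) - 2 * k * log N) atTop (𝓝 L)) :
    ∫ x in (0 : ℝ)..1, regularizedPeriodization g k x = L - 2 * k * eulerMascheroniConstant := by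
  have hsum := (hasSum_integral_sub_div_abs hg hu hgu).nat_add_neg_add_one.tendsto_sum_nat
  refine tendsto_nhds_unique hsum ?_
  have hlim := (hL.sub (tendsto_harmonic_sub_log.const_mul (2 * k))).add
    (tendsto_const_div_atTop_nhds_zero_nat k)
  rw [add_zero] at hlim
  refine hlim.congr fun N => ?_
  rw [mul_sub, sub_sub_sub_cancel_right, ← sum_integral_add_integral_neg_eq_sub_harmonic hg]
  simp

end RegularizedPeriodization

section SpecialFunctions

lemma abs_arctan_le_abs (x : ℝ) : |arctan x| ≤ |x| := by
  have hlip : LipschitzWith 1 arctan := by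
    refine lipschitzWith_of_nnnorm_deriv_le differentiable_arctan fun x => ?_
    rw [Real.deriv_arctan, ← NNReal.coe_le_coe, coe_nnnorm, norm_of_nonneg (by positivity),
      NNReal.coe_one, div_le_one (by positivity)]
    exact le_add_of_nonneg_right (sq_nonneg x)
  simpa [dist_eq] using hlip.dist_le_mul x 0

lemma abs_arctan_div_self_le_one (x : ℝ) : |arctan x / x| ≤ 1 := by
  rw [abs_div]
  exact div_le_one_of_le₀ (abs_arctan_le_abs x) (abs_nonneg x)

lemma abs_arctan_lt_pi_div_two (x : ℝ) : |arctan x| < π / 2 :=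
  abs_lt.2 ⟨neg_pi_div_two_lt_arctan x, arctan_lt_pi_div_two x⟩

lemma intervalIntegrable_arctan_div_self (a b : ℝ) :
    IntervalIntegrable (fun t => arctan t / t) volume a b :=
  (intervalIntegrable_const (c := (1 : ℝ))).mono_fun'
    (measurable_arctan.div measurable_id).aestronglyMeasurable
    (ae_of_all _ abs_arctan_div_self_le_one)

/-- The inverse tangent integral `Ti₂`. -/
noncomputable def inverseTangentIntegral (x : ℝ) : ℝ := ∫ t in (0 : ℝ)..x, arctan t / t

lemma abs_inverseTangentIntegral_le_abs (x : ℝ) : |inverseTangentIntegral x| ≤ |x| := by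
  simpa [inverseTangentIntegral] using
    intervalIntegral.norm_integral_le_of_norm_le_const (a := 0) (b := x) (C := 1)
      (f := fun t => arctan t / t) fun t _ => abs_arctan_div_self_le_one t

lemma hasDerivAt_inverseTangentIntegral {x : ℝ} (hx : x ≠ 0) :
    HasDerivAt inverseTangentIntegral (arctan x / x) x :=
  intervalIntegral.integral_hasDerivAt_right (intervalIntegrable_arctan_div_self 0 x)
    (measurable_arctan.div measurable_id).stronglyMeasurable.stronglyMeasurableAtFilter
    (continuous_arctan.continuousAt.div continuousAt_id hx)

lemma inverseTangentIntegral_sub_inv {x : ℝ} (hx : 0 < x) :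
    inverseTangentIntegral x - inverseTangentIntegral x⁻¹ = π / 2 * log x := by
  let f (x : ℝ) := inverseTangentIntegral x - inverseTangentIntegral x⁻¹ - π / 2 * log x
  have hf : ∀ x ∈ Ioi (0 : ℝ), HasDerivAt f 0 x := fun x (hx : 0 < x) => by
    refine (((hasDerivAt_inverseTangentIntegral hx.ne').sub
      ((hasDerivAt_inverseTangentIntegral (inv_ne_zero hx.ne')).comp x
        (hasDerivAt_inv hx.ne'))).sub ((hasDerivAt_log hx.ne').const_mul (π / 2))).congr_deriv ?_
    rw [arctan_inv_of_pos hx]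
    field_simp
    ring
  have hconst : f x = f 1 := isOpen_Ioi.is_const_of_deriv_eq_zero isPreconnected_Ioi
    (fun x hx => (hf x hx).differentiableAt.differentiableWithinAt)
    (fun x hx => (hf x hx).deriv) hx (mem_Ioi.2 one_pos)
  have hone : f 1 = 0 := by simp [f]
  exact sub_eq_zero.1 (hconst.trans hone)

lemma tendsto_inverseTangentIntegral_sub_log :
    Tendsto (fun x => inverseTangentIntegral x - π / 2 * log x) atTop (𝓝 0) := by
  have hinv : Tendsto (fun x : ℝ => |x⁻¹|) atTop (𝓝 0) := by
    simpa using (tendsto_inv_atTop_zero (𝕜 := ℝ)).abs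
  refine (squeeze_zero_norm (fun x => abs_inverseTangentIntegral_le_abs x⁻¹) hinv).congr' ?_
  filter_upwards [eventually_gt_atTop 0] with x hx
  rw [← inverseTangentIntegral_sub_inv hx, sub_sub_cancel]

lemma sqrt_one_add_div_sq {b : ℝ} (hb : 0 < b) (c : ℝ) :
    √(1 + (c / b) ^ 2) = √(b ^ 2 + c ^ 2) / b := by
  rw [eq_div_iff hb.ne', ← sqrt_sq hb.le, ← sqrt_mul (by positivity), sqrt_sq hb.le]
  field_simp

lemma tendsto_arsinh_sub_log : Tendsto (fun x => arsinh x - log x) atTop (𝓝 (log 2)) := by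
  have hratio : Tendsto (fun x : ℝ => 1 + √(1 + (1 / x) ^ 2)) atTop (𝓝 2) := by
    have hinv : Tendsto (fun x : ℝ => 1 / x) atTop (𝓝 0) := by
      simpa using tendsto_inv_atTop_zero (𝕜 := ℝ)
    convert ((hinv.pow 2).const_add 1).sqrt.const_add 1 using 2
    norm_num
  refine (hratio.log two_ne_zero).congr' ?_
  filter_upwards [eventually_gt_atTop 0] with x hx
  rw [sqrt_one_add_div_sq hx, arsinh, ← log_div (by positivity) hx.ne', one_pow, add_div,
    div_self hx.ne', add_comm (x ^ 2)]

lemma arsinh_div {b : ℝ} (hb : 0 < b) (c : ℝ) :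
    arsinh (c / b) = log b - log (√(b ^ 2 + c ^ 2) - c) := by
  have hlt : c < √(b ^ 2 + c ^ 2) := lt_sqrt_of_sq_lt (by linarith [sq_pos_of_pos hb])
  rw [← neg_neg (c / b), arsinh_neg, arsinh, neg_sq, sqrt_one_add_div_sq hb, neg_add_eq_sub,
    ← sub_div, log_div (by linarith) hb.ne', neg_sub]

lemma integral_inv_sqrt_sq_add_sq {b : ℝ} (hb : 0 < b) (c : ℝ) :
    ∫ t in (0 : ℝ)..c, (√(b ^ 2 + t ^ 2))⁻¹ = arsinh (c / b) := by
  have hderiv : ∀ t, HasDerivAt (fun t => arsinh (t / b)) (√(b ^ 2 + t ^ 2))⁻¹ t := fun t => by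
    refine ((hasDerivAt_id t).div_const b).arsinh.congr_deriv ?_
    rw [id_eq, sqrt_one_add_div_sq hb, smul_eq_mul, inv_div, div_mul_div_comm, mul_one,
      mul_comm, ← div_div, div_self hb.ne', one_div]
  rw [intervalIntegral.integral_eq_sub_of_hasDerivAt fun t _ => hderiv t]
  · simp
  · exact (Continuous.inv₀ (by fun_prop) fun t => by positivity).intervalIntegrable _ _

lemma integral_neg_self_of_even {E : Type*} [NormedAddCommGroup E] [NormedSpace ℝ E] {f : ℝ → E}
    (hf : f.Even) {R : ℝ} (hint : IntervalIntegrable f volume 0 R) :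
    ∫ x in -R..R, f x = (2 : ℝ) • ∫ x in (0 : ℝ)..R, f x := by
  have hleft : ∫ x in -R..0, f x = ∫ x in (0 : ℝ)..R, f x := by
    simpa [hf _] using (intervalIntegral.integral_comp_neg (a := 0) (b := R) f).symm
  have hint' : IntervalIntegrable f volume (-R) 0 := by
    simpa [hf _] using ((IntervalIntegrable.iff_comp_neg (f := f)).1 hint).symm
  rw [← intervalIntegral.integral_add_adjacent_intervals hint' hint, hleft, two_smul]

end SpecialFunctions

section HalfLinePotential

/-- The potential `π⁻¹ ∫_{-∞}^c dt / (r ^ 2 + t ^ 2)` that a half-line ending at height `c` creates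
at a point of height `0` and distance `r > 0` from its axis, in closed form. It is `0` at `r = 0`,
where the closed form divides by zero. -/
noncomputable def halfLinePotential (c r : ℝ) : ℝ := (1 / 2 + arctan (c / r) / π) / r

lemma halfLinePotential_eq_add_integral (c : ℝ) {r : ℝ} (hr : r ≠ 0) :
    halfLinePotential c r = 1 / 2 * r⁻¹ + π⁻¹ * ∫ t in (0 : ℝ)..c, (r ^ 2 + t ^ 2)⁻¹ := by
  rw [integral_inv_sq_add_sq hr, zero_div, arctan_zero, halfLinePotential]
  field_simp
  ring

lemma halfLinePotential_of_neg {c r : ℝ} (hc : c < 0) (hr : 0 < r) :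
    halfLinePotential c r = π⁻¹ * (-c)⁻¹ * (arctan (r / -c) / (r / -c)) := by
  have harctan : arctan (c / r) = arctan (r / -c) - π / 2 := by
    rw [← neg_neg c, neg_div, arctan_neg, ← inv_div, neg_neg,
      arctan_inv_of_pos (div_pos hr (neg_pos.2 hc))]
    ring
  have hc' : c ≠ 0 := hc.ne
  rw [halfLinePotential, harctan]
  field_simp
  ring

lemma inv_pi_le_one : π⁻¹ ≤ 1 := inv_le_one_of_one_le₀ (by linarith [pi_gt_three])

lemma abs_halfLinePotential_sub_le (c : ℝ) {r : ℝ} (hr : 0 < r) :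
    |halfLinePotential c r - 1 / 2 / r| ≤ |c| / r ^ 2 :=
  calc |halfLinePotential c r - 1 / 2 / r| = π⁻¹ * |arctan (c / r)| / r := by
        rw [halfLinePotential, ← sub_div, add_sub_cancel_left, abs_div, abs_div, abs_of_pos hr,
          abs_of_pos pi_pos, inv_mul_eq_div]
    _ ≤ 1 * |c / r| / r :=
        div_le_div_of_nonneg_right (mul_le_mul inv_pi_le_one (abs_arctan_le_abs _)
          (abs_nonneg _) zero_le_one) hr.le
    _ = |c| / r ^ 2 := by rw [one_mul, abs_div, abs_of_pos hr, div_div, sq]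

lemma abs_halfLinePotential_le_inv (c : ℝ) {r : ℝ} (hr : 0 < r) :
    |halfLinePotential c r| ≤ r⁻¹ := by
  have hangle : |arctan (c / r) / π| ≤ 1 / 2 := by
    rw [abs_div, abs_of_pos pi_pos, div_le_iff₀ pi_pos]
    linarith [abs_arctan_lt_pi_div_two (c / r)]
  rw [halfLinePotential, abs_div, abs_of_pos hr, ← one_div]
  gcongr
  rw [abs_le] at hangle ⊢
  constructor <;> linarith [hangle.1, hangle.2]

lemma abs_halfLinePotential_le_of_neg {c r : ℝ} (hc : c < 0) (hr : 0 ≤ r) :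
    |halfLinePotential c r| ≤ (-c)⁻¹ := by
  have hc' : 0 < (-c)⁻¹ := inv_pos.2 (neg_pos.2 hc)
  obtain rfl | hr := hr.eq_or_lt
  · simpa [halfLinePotential] using hc.le
  rw [halfLinePotential_of_neg hc hr, abs_mul, abs_of_pos (by positivity)]
  calc π⁻¹ * (-c)⁻¹ * |arctan (r / -c) / (r / -c)| ≤ 1 * (-c)⁻¹ * 1 := by
        gcongr
        · exact inv_pi_le_one
        · exact abs_arctan_div_self_le_one _
    _ = (-c)⁻¹ := by ring

/-- The restriction of the half-line potential to a line orthogonal to the axis and passing it at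
distance `|b|`, parametrised by arc length from the nearest point. -/
noncomputable def linePotential (b c x : ℝ) : ℝ := halfLinePotential c √(b ^ 2 + x ^ 2)

lemma even_linePotential (b c : ℝ) : (linePotential b c).Even := fun x => by
  simp only [linePotential, neg_sq]

lemma measurable_linePotential (b c : ℝ) : Measurable (linePotential b c) := by
  unfold linePotential halfLinePotential
  fun_prop

lemma exists_abs_linePotential_le {b c : ℝ} (hbc : 0 < b ∨ c < 0) :
    ∃ K, ∀ x, |linePotential b c x| ≤ K := by
  obtain hb | hc := hbc
  · refine ⟨b⁻¹, fun x => (abs_halfLinePotential_le_inv c (by positivity)).trans ?_⟩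
    gcongr
    exact le_sqrt_of_sq_le (le_add_of_nonneg_right (sq_nonneg x))
  · exact ⟨(-c)⁻¹, fun x => abs_halfLinePotential_le_of_neg hc (sqrt_nonneg _)⟩

lemma intervalIntegrable_linePotential {b c : ℝ} (hbc : 0 < b ∨ c < 0) (x₁ x₂ : ℝ) :
    IntervalIntegrable (linePotential b c) volume x₁ x₂ := by
  obtain ⟨K, hK⟩ := exists_abs_linePotential_le hbc
  exact (intervalIntegrable_const (c := K)).mono_fun'
    (measurable_linePotential b c).aestronglyMeasurable (ae_of_all _ hK)

lemma abs_linePotential_sub_le {b : ℝ} (hb : 0 ≤ b) (c : ℝ) {x : ℝ} (hx : x ≠ 0) :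
    |linePotential b c x - (1 / 2 / |x|)| ≤ (|c| + b) / x ^ 2 := by
  set r := √(b ^ 2 + x ^ 2) with hr
  have hxpos : 0 < |x| := abs_pos.2 hx
  have hxr : |x| ≤ r := abs_le_sqrt (le_add_of_nonneg_left (sq_nonneg b))
  have hrpos : 0 < r := hxpos.trans_le hxr
  have hrx : r ≤ b + |x| := by
    rw [hr, sqrt_le_left (by positivity), ← sq_abs x]
    nlinarith
  have hinv : |1 / 2 / r - (1 / 2 / |x|)| ≤ b / x ^ 2 :=
    calc |1 / 2 / r - (1 / 2 / |x|)| = 1 / 2 * ((r - |x|) / (r * |x|)) := by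
          rw [abs_sub_comm, abs_of_nonneg (by rw [sub_nonneg]; gcongr)]
          field_simp
      _ ≤ 1 * (b / (|x| * |x|)) := by
          gcongr
          · norm_num
          · linarith
      _ = b / x ^ 2 := by rw [one_mul, abs_mul_abs_self, sq]
  calc |linePotential b c x - (1 / 2 / |x|)|
      ≤ |halfLinePotential c r - 1 / 2 / r| + |1 / 2 / r - (1 / 2 / |x|)| := abs_sub_le _ _ _
    _ ≤ |c| / |x| ^ 2 + b / x ^ 2 := by
        gcongr
        exact (abs_halfLinePotential_sub_le c hrpos).trans (by gcongr)
    _ = (|c| + b) / x ^ 2 := by rw [sq_abs, add_div]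

end HalfLinePotential

section LinePotentialLimit

lemma integral_linePotential_of_pos {b : ℝ} (hb : 0 < b) (c R : ℝ) :
    ∫ x in (0 : ℝ)..R, linePotential b c x = 1 / 2 * arsinh (R / b) +
      π⁻¹ * ∫ t in (0 : ℝ)..c, arctan (R / √(b ^ 2 + t ^ 2)) / √(b ^ 2 + t ^ 2) := by
  let f (x t : ℝ) : ℝ := (b ^ 2 + x ^ 2 + t ^ 2)⁻¹
  have hf : Continuous f.uncurry := Continuous.inv₀ (by fun_prop) fun p => by
    positivity
  have hinv : Continuous fun x => (√(b ^ 2 + x ^ 2))⁻¹ :=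
    Continuous.inv₀ (by fun_prop) fun x => by positivity
  have hpotential (x : ℝ) : linePotential b c x =
      1 / 2 * (√(b ^ 2 + x ^ 2))⁻¹ + π⁻¹ * ∫ t in (0 : ℝ)..c, f x t := by
    rw [linePotential, halfLinePotential_eq_add_integral c (by positivity),
      sq_sqrt (by positivity)]
  have hswap : ∫ x in (0 : ℝ)..R, ∫ t in (0 : ℝ)..c, f x t =
      ∫ t in (0 : ℝ)..c, ∫ x in (0 : ℝ)..R, f x t :=
    intervalIntegral_intervalIntegral_swap <|
      (hf.continuousOn.integrableOn_compact (isCompact_uIcc.prod isCompact_uIcc)).mono_set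
        (prod_mono uIoc_subset_uIcc uIoc_subset_uIcc)
  have hinner (t : ℝ) : ∫ x in (0 : ℝ)..R, f x t =
      arctan (R / √(b ^ 2 + t ^ 2)) / √(b ^ 2 + t ^ 2) := by
    have h := integral_inv_sq_add_sq (a := 0) (b := R) (c := √(b ^ 2 + t ^ 2)) (by positivity)
    rw [sq_sqrt (by positivity), zero_div, arctan_zero, sub_zero, inv_mul_eq_div] at h
    simpa only [f, add_right_comm] using h
  simp_rw [hpotential]
  rw [intervalIntegral.integral_add ((hinv.const_mul _).intervalIntegrable _ _)
      (((intervalIntegral.continuous_parametric_intervalIntegral_of_continuous' hf 0 c).const_mul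
        _).intervalIntegrable _ _),
    intervalIntegral.integral_const_mul, intervalIntegral.integral_const_mul,
    integral_inv_sqrt_sq_add_sq hb, hswap]
  simp_rw [hinner]

lemma tendsto_integral_arctan_div_sqrt {b : ℝ} (hb : 0 < b) (c : ℝ) :
    Tendsto (fun R => ∫ t in (0 : ℝ)..c, arctan (R / √(b ^ 2 + t ^ 2)) / √(b ^ 2 + t ^ 2)) atTop
      (𝓝 (π / 2 * arsinh (c / b))) := by
  have hpos (t : ℝ) : 0 < √(b ^ 2 + t ^ 2) := by positivity
  rw [← integral_inv_sqrt_sq_add_sq hb, ← intervalIntegral.integral_const_mul]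
  refine intervalIntegral.tendsto_integral_filter_of_dominated_convergence (fun _ => π / 2 / b)
    (Eventually.of_forall fun R => Measurable.aestronglyMeasurable (by fun_prop))
    (Eventually.of_forall fun R => ae_of_all _ fun t _ => ?_) intervalIntegrable_const
    (ae_of_all _ fun t _ => ?_)
  · rw [norm_div, norm_eq_abs, norm_of_nonneg (hpos t).le]
    gcongr
    · exact (abs_arctan_lt_pi_div_two _).le
    · exact le_sqrt_of_sq_le (le_add_of_nonneg_right (sq_nonneg t))
  · exact ((tendsto_nhds_of_tendsto_nhdsWithin tendsto_arctan_atTop).comp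
      (tendsto_id.atTop_div_const (hpos t))).div_const _

lemma tendsto_integral_linePotential_of_pos {b : ℝ} (hb : 0 < b) (c : ℝ) :
    Tendsto (fun R => 2 * (∫ x in (0 : ℝ)..R, linePotential b c x) - log R) atTop
      (𝓝 (log 2 - log (√(b ^ 2 + c ^ 2) - c))) := by
  have harsinh : Tendsto (fun R => arsinh (R / b) - log (R / b)) atTop (𝓝 (log 2)) :=
    tendsto_arsinh_sub_log.comp (tendsto_id.atTop_div_const hb)
  have hlim := (harsinh.sub_const (log b)).add
    ((tendsto_integral_arctan_div_sqrt hb c).const_mul (2 / π))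
  have hval : log 2 - log b + 2 / π * (π / 2 * arsinh (c / b)) =
      log 2 - log (√(b ^ 2 + c ^ 2) - c) := by
    rw [arsinh_div hb]
    field_simp
    ring
  rw [hval] at hlim
  refine hlim.congr' ?_
  filter_upwards [eventually_gt_atTop 0] with R hR
  rw [integral_linePotential_of_pos hb, log_div hR.ne' hb.ne']
  ring

lemma integral_linePotential_zero {c R : ℝ} (hc : c < 0) (hR : 0 ≤ R) :
    ∫ x in (0 : ℝ)..R, linePotential 0 c x = π⁻¹ * inverseTangentIntegral (R / -c) := by
  have hpotential : ∀ x ∈ uIoc 0 R, linePotential 0 c x =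
      π⁻¹ * (-c)⁻¹ * (arctan (x / -c) / (x / -c)) := fun x hx => by
    rw [uIoc_of_le hR] at hx
    rw [linePotential, zero_pow two_ne_zero, zero_add, sqrt_sq hx.1.le,
      halfLinePotential_of_neg hc hx.1]
  rw [intervalIntegral.integral_congr_ae (ae_of_all _ hpotential),
    intervalIntegral.integral_const_mul,
    intervalIntegral.integral_comp_div (fun t => arctan t / t) (neg_ne_zero.2 hc.ne), zero_div,
    smul_eq_mul, mul_assoc, inv_mul_cancel_left₀ (neg_ne_zero.2 hc.ne), inverseTangentIntegral]

lemma tendsto_integral_linePotential_zero {c : ℝ} (hc : c < 0) :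
    Tendsto (fun R => 2 * (∫ x in (0 : ℝ)..R, linePotential 0 c x) - log R) atTop
      (𝓝 (log 2 - log (√(0 ^ 2 + c ^ 2) - c))) := by
  have hc' : 0 < -c := neg_pos.2 hc
  have hval : log 2 - log (√(0 ^ 2 + c ^ 2) - c) = 2 / π * 0 - log (-c) := by
    have hdouble : |c| - c = 2 * -c := by rw [abs_of_neg hc]; ring
    rw [zero_pow two_ne_zero, zero_add, sqrt_sq_eq_abs, hdouble, log_mul two_ne_zero hc'.ne']
    ring
  rw [hval]
  refine (((tendsto_inverseTangentIntegral_sub_log.comp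
    (tendsto_id.atTop_div_const hc')).const_mul (2 / π)).sub_const _).congr' ?_
  filter_upwards [eventually_gt_atTop 0] with R hR
  rw [integral_linePotential_zero hc hR.le, Function.comp_apply, id_eq, log_div hR.ne' hc'.ne']
  field_simp
  ring

lemma tendsto_integral_linePotential {b c : ℝ} (hb : 0 ≤ b) (hbc : 0 < b ∨ c < 0) :
    Tendsto (fun R => (∫ x in -R..R, linePotential b c x) - log R) atTop
      (𝓝 (log 2 - log (√(b ^ 2 + c ^ 2) - c))) := by
  simp_rw [integral_neg_self_of_even (even_linePotential b c)
    (intervalIntegrable_linePotential hbc 0 _), smul_eq_mul]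
  obtain rfl | hb := hb.eq_or_lt
  · exact tendsto_integral_linePotential_zero (hbc.resolve_left (lt_irrefl 0))
  · exact tendsto_integral_linePotential_of_pos hb c

lemma exists_summable_bound_linePotential {b c : ℝ} (hb : 0 ≤ b) (hbc : 0 < b ∨ c < 0) :
    ∃ u : ℤ → ℝ, Summable u ∧ ∀ x ∈ Icc (0 : ℝ) 1, ∀ n : ℤ,
      ‖linePotential b c (x + n) - 1 / 2 / |(n : ℝ)|‖ ≤ u n := by
  obtain ⟨K, hK⟩ := exists_abs_linePotential_le hbc
  exact exists_summable_bound_comp_add_intCast_sub hK fun _ => abs_linePotential_sub_le hb c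

lemma intervalIntegrable_regularizedPeriodization_linePotential {b c : ℝ} (hb : 0 ≤ b)
    (hbc : 0 < b ∨ c < 0) :
    IntervalIntegrable (regularizedPeriodization (linePotential b c) (1 / 2)) volume 0 1 := by
  obtain ⟨u, hu, hbound⟩ := exists_summable_bound_linePotential hb hbc
  exact intervalIntegrable_regularizedPeriodization (measurable_linePotential b c) hu hbound

lemma integral_regularizedPeriodization_linePotential {b c : ℝ} (hb : 0 ≤ b)
    (hbc : 0 < b ∨ c < 0) :
    ∫ x in (0 : ℝ)..1, regularizedPeriodization (linePotential b c) (1 / 2) x =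
      log 2 - eulerMascheroniConstant - log (√(b ^ 2 + c ^ 2) - c) := by
  obtain ⟨u, hu, hbound⟩ := exists_summable_bound_linePotential hb hbc
  have hlim := (tendsto_integral_linePotential hb hbc).comp tendsto_natCast_atTop_atTop
  rw [integral_regularizedPeriodization (intervalIntegrable_linePotential hbc) hu hbound
    (hlim.congr fun N => by simp)]
  ring

end LinePotentialLimit

section ReductionToLinePotential

/-- The distance `b` from the axis to the line `x ↦ x + i y`, rescaled so that
`μ₁² + a₂₂ |x + i y|² = a₂₂ (b² + x²)`. -/
noncomputable def axisDistance (a22 μ1 y : ℝ) : ℝ := √(μ1 ^ 2 / a22 + y ^ 2)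

/-- The height of the end of the half-line whose potential is `α₁`, in the units of
`axisDistance`. -/
noncomputable def endpointHeight (a11 a12 a22 μ1 μ2 : ℝ) : ℝ :=
  (a22 * μ2 + a12 * μ1) / √((a11 * a22 - a12 ^ 2) * a22)

variable {a11 a12 a22 μ1 μ2 y : ℝ}

lemma pos_right_of_pos_left_of_det_pos (ha11 : 0 < a11) (hA : 0 < a11 * a22 - a12 ^ 2) :
    0 < a22 :=
  pos_of_mul_pos_right (by linarith [sq_nonneg a12] : 0 < a11 * a22) ha11.le

lemma axisDistance_nonneg : 0 ≤ axisDistance a22 μ1 y := sqrt_nonneg _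

lemma axisDistance_sq (ha22 : 0 < a22) : axisDistance a22 μ1 y ^ 2 = μ1 ^ 2 / a22 + y ^ 2 :=
  sq_sqrt (by positivity)

lemma axisDistance_pos_or_endpointHeight_neg (ha22 : 0 < a22) (hA : 0 < a11 * a22 - a12 ^ 2)
    (hoff : ¬(μ1 = 0 ∧ y = 0 ∧ 0 ≤ μ2)) :
    0 < axisDistance a22 μ1 y ∨ endpointHeight a11 a12 a22 μ1 μ2 < 0 := by
  by_cases hμ1 : μ1 = 0
  · by_cases hy : y = 0
    · have hμ2 : μ2 < 0 := not_le.1 fun h => hoff ⟨hμ1, hy, h⟩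
      right
      rw [endpointHeight, hμ1, mul_zero, add_zero]
      exact div_neg_of_neg_of_pos (mul_neg_of_pos_of_neg ha22 hμ2) (by positivity)
    · exact .inl (sqrt_pos.2 (by positivity))
  · exact .inl (sqrt_pos.2 (by positivity))

lemma sqrt_axisDistance_sq_add_endpointHeight_sq (ha22 : 0 < a22)
    (hA : 0 < a11 * a22 - a12 ^ 2) :
    √(axisDistance a22 μ1 y ^ 2 + endpointHeight a11 a12 a22 μ1 μ2 ^ 2) =
      √(a11 * μ1 ^ 2 + 2 * a12 * μ1 * μ2 + a22 * μ2 ^ 2 + (a11 * a22 - a12 ^ 2) * y ^ 2) /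
        √(a11 * a22 - a12 ^ 2) := by
  rw [← sqrt_div' _ hA.le, axisDistance_sq ha22, endpointHeight, div_pow, sq_sqrt (by positivity)]
  set A := a11 * a22 - a12 ^ 2 with hAdef
  congr 1
  field_simp
  rw [hAdef]
  ring

lemma alpha1_ofReal_add_mul_I (ha22 : 0 < a22) (hA : 0 < a11 * a22 - a12 ^ 2) (x : ℝ) :
    alpha1 a11 a12 a22 μ1 μ2 ((x : ℂ) + (y : ℂ) * Complex.I) = 1 / (2 * √a22) *
      linePotential (axisDistance a22 μ1 y) (endpointHeight a11 a12 a22 μ1 μ2) x := by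
  have hsqrt : √(μ1 ^ 2 + a22 * Complex.normSq ((x : ℂ) + (y : ℂ) * Complex.I)) =
      √a22 * √(axisDistance a22 μ1 y ^ 2 + x ^ 2) := by
    rw [Complex.normSq_add_mul_I, axisDistance_sq ha22, ← sqrt_mul ha22.le]
    congr 1
    field_simp
    ring
  rw [alpha1, hsqrt, linePotential, halfLinePotential, endpointHeight, sqrt_mul hA.le,
    div_div (a22 * μ2 + a12 * μ1), ← mul_assoc √(a11 * a22 - a12 ^ 2), ← mul_assoc 2,
    ← one_div_mul_one_div]
  ring

lemma tildeAlpha1_ofReal_add_mul_I (ha22 : 0 < a22) (hA : 0 < a11 * a22 - a12 ^ 2)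
    (hoff : ¬(μ1 = 0 ∧ y = 0 ∧ 0 ≤ μ2)) {x : ℝ} (hx : x ∈ Icc (0 : ℝ) 1) :
    tildeAlpha1 a11 a12 a22 μ1 μ2 ((x : ℂ) + (y : ℂ) * Complex.I) =
      1 / (2 * √a22) * regularizedPeriodization
        (linePotential (axisDistance a22 μ1 y) (endpointHeight a11 a12 a22 μ1 μ2)) (1 / 2) x := by
  obtain ⟨u, hu, hbound⟩ := exists_summable_bound_linePotential axisDistance_nonneg
    (axisDistance_pos_or_endpointHeight_neg ha22 hA hoff)
  rw [tildeAlpha1, regularizedPeriodization,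
    (Summable.of_norm_bounded hu (hbound x hx)).tsum_eq_add_tsum_ite 0, mul_add, ← tsum_mul_left,
    alpha1_ofReal_add_mul_I ha22 hA]
  congr 1
  · simp
  refine tsum_congr fun n => ?_
  rw [alpha1Term]
  split_ifs with hn
  · simp
  have hshift : (x : ℂ) + (y : ℂ) * Complex.I + (n : ℂ) =
      ((x + n : ℝ) : ℂ) + (y : ℂ) * Complex.I := by
    push_cast
    ring
  rw [hshift, alpha1_ofReal_add_mul_I ha22 hA]
  field_simp
  ring

end ReductionToLinePotential

/-- off the closed ray `{μ₁ = 0, y = 0, μ₂ ≥ 0}`, the Fourier average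
`ᾱ₁(μ₁,μ₂,y) = ∫₀¹ α̃₁(μ₁,μ₂,x+iy) dx` is well defined and equals
`(1/(2√a₂₂))·(log 2 − γ_E − log(ϱ'/√A − (a₂₂μ₂+a₁₂μ₁)/√(A·a₂₂)))`. -/
theorem statement5 (a11 a12 a22 : ℝ) (ha11 : 0 < a11) (hA : 0 < a11 * a22 - a12 ^ 2)
    (μ1 μ2 y : ℝ) (hoff : ¬(μ1 = 0 ∧ y = 0 ∧ 0 ≤ μ2)) :
    IntervalIntegrable
      (fun x : ℝ => tildeAlpha1 a11 a12 a22 μ1 μ2 ((x : ℂ) + (y : ℂ) * Complex.I))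
      MeasureTheory.volume 0 1 ∧
    (∫ x in (0 : ℝ)..1, tildeAlpha1 a11 a12 a22 μ1 μ2 ((x : ℂ) + (y : ℂ) * Complex.I))
      = (1 / (2 * Real.sqrt a22)) *
        (Real.log 2 - Real.eulerMascheroniConstant -
          Real.log (Real.sqrt (a11 * μ1 ^ 2 + 2 * a12 * μ1 * μ2 + a22 * μ2 ^ 2
              + (a11 * a22 - a12 ^ 2) * y ^ 2) / Real.sqrt (a11 * a22 - a12 ^ 2)
            - (a22 * μ2 + a12 * μ1) / Real.sqrt ((a11 * a22 - a12 ^ 2) * a22))) := by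
  have ha22 := pos_right_of_pos_left_of_det_pos ha11 hA
  have hbc := axisDistance_pos_or_endpointHeight_neg ha22 hA hoff
  have htilde := fun x (hx : x ∈ uIcc (0 : ℝ) 1) =>
    tildeAlpha1_ofReal_add_mul_I ha22 hA hoff (uIcc_of_le (zero_le_one' ℝ) ▸ hx)
  constructor
  · exact ((intervalIntegrable_regularizedPeriodization_linePotential axisDistance_nonneg
      hbc).const_mul _).congr fun x hx => (htilde x (uIoc_subset_uIcc hx)).symm
  · rw [intervalIntegral.integral_congr htilde, intervalIntegral.integral_const_mul,
      integral_regularizedPeriodization_linePotential axisDistance_nonneg hbc,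
      sqrt_axisDistance_sq_add_endpointHeight_sq ha22 hA, endpointHeight]
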